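/- For all x, y ∈ T, the integral π^{−1/2} ∫₀^∞ H_t(x,y) t^{−1/2} dt converges and equals q^{−ℓ(x)/2} · G(d(x,y)) · q^{−ℓ(y)/2}, where G(n) = Σ_{k≥0} q^{−(n+2k)/2} k̃_ℤ(n+2k+1) (an absolutely convergent series). In other words, the integral kernel of 𝓛^{−1/2} with respect to μ is K(x,y) = q^{−ℓ(x)/2} G(d(x,y)) q^{−ℓ(y)/2}. -/

import Mathlib

open MeasureTheory ENNReal Set Function
open scoped NNReal ENNReal Classical

noncomputable section

/-- A homogeneous tree of degree `q+1` with a distinguished end (mythical ancestor),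
encoded through its graph distance `dist`, horocyclic level function `level`,
and predecessor map `pred`. -/
structure FlowTree (q : ℕ) where
  V : Type
  countableV : Countable V
  dist : V → V → ℕ
  level : V → ℤ
  pred : V → V
  dist_self : ∀ x, dist x x = 0
  eq_of_dist_eq_zero : ∀ x y, dist x y = 0 → x = y
  dist_comm : ∀ x y, dist x y = dist y x
  dist_triangle : ∀ x y z, dist x z ≤ dist x y + dist y z
  level_pred : ∀ x, level (pred x) = level x + 1
  succ_finite : ∀ x, Set.Finite {y | pred y = x}
  succ_card : ∀ x, Nat.card {y // pred y = x} = q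
  dist_le : ∀ (x y : V) (n m : ℕ), pred^[n] x = pred^[m] y → dist x y ≤ n + m
  dist_spec : ∀ x y, ∃ n m : ℕ, pred^[n] x = pred^[m] y ∧ n + m = dist x y

namespace FlowTree

variable {q : ℕ} (S : FlowTree q)

/-- The canonical flow measure weight `μ(x) = q^{ℓ(x)}`, as an extended nonnegative real. -/
def w (x : S.V) : ℝ≥0∞ := (q : ℝ≥0∞) ^ ((S.level x : ℤ) : ℝ)

/-- The canonical flow measure weight `μ(x) = q^{ℓ(x)}`, as a real number. -/
def wR (x : S.V) : ℝ := (q : ℝ) ^ (S.level x)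

/-- The canonical flow measure of a set `E ⊆ T`. -/
def muS (E : Set S.V) : ℝ≥0∞ := ∑' x : E, S.w x

/-- The `L^p(μ)` (quasi)norm, `p ∈ [1,∞]`. -/
def lpNorm (p : ℝ≥0∞) {E : Type*} [NNNorm E] (f : S.V → E) : ℝ≥0∞ :=
  if p = ∞ then ⨆ x, (‖f x‖₊ : ℝ≥0∞)
  else (∑' x, (‖f x‖₊ : ℝ≥0∞) ^ p.toReal * S.w x) ^ (1 / p.toReal)

/-- The weak `L^{1,∞}(μ)` quasinorm `sup_{λ>0} λ · μ({|f| > λ})`. -/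
def wkNorm {E : Type*} [NNNorm E] (f : S.V → E) : ℝ≥0∞ :=
  ⨆ t : ℝ≥0, (t : ℝ≥0∞) * S.muS {x | t < ‖f x‖₊}

/-- `Σf(x) = f(𝔭(x))`. -/
def sig (f : S.V → ℂ) : S.V → ℂ := fun x => f (S.pred x)

/-- `Σ*f(x) = (1/q) Σ_{y ∈ succ(x)} f(y)`. -/
def sigStar (f : S.V → ℂ) : S.V → ℂ :=
  fun x => (q : ℂ)⁻¹ * ∑' y : {y | S.pred y = x}, f y.1

/-- The flow gradient `∇ = id − Σ`. -/
def grad (f : S.V → ℂ) : S.V → ℂ := fun x => f x - f (S.pred x)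

/-- `∇* = id − Σ*`. -/
def gradStar (f : S.V → ℂ) : S.V → ℂ := fun x => f x - S.sigStar f x

/-- The modulus of the gradient `Df(x) = Σ_{y ∼ x} |f(x) − f(y)|`. -/
def Dmod (f : S.V → ℂ) : S.V → ℝ :=
  fun x => ∑' y : {y | S.dist x y = 1}, ‖f x - f y.1‖

/-- `Σ̃_n = Σ^n` for `n ≥ 0` and `(Σ*)^{−n}` for `n < 0`. -/
def sigTilde (n : ℤ) (f : S.V → ℂ) : S.V → ℂ :=
  if 0 ≤ n then (S.sig)^[n.toNat] f else (S.sigStar)^[(-n).toNat] f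

/-- `Σ*` acting on real-valued functions. -/
def sigStarR (f : S.V → ℝ) : S.V → ℝ :=
  fun x => (q : ℝ)⁻¹ * ∑' y : {y | S.pred y = x}, f y.1

/-- The flow Laplacian `𝓛 = id − (Σ + Σ*)/2`, acting pointwise on real functions. -/
def lapR (f : S.V → ℝ) : S.V → ℝ :=
  fun x => f x - (f (S.pred x) + S.sigStarR f x) / 2

/-- `δ_y/μ(y)`, the normalized delta at `y`. -/
def deltaMu (y : S.V) : S.V → ℝ := fun z => if z = y then (S.wR y)⁻¹ else 0

/-- The heat kernel `H_t(x,y)` of the flow Laplacian, i.e. `(e^{−t𝓛} (δ_y/μ(y)))(x)`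
computed via the exponential power series of the bounded operator `𝓛`. -/
def Hker (t : ℝ) (x y : S.V) : ℝ :=
  ∑' n : ℕ, ((-t) ^ n / (n.factorial : ℝ)) * ((S.lapR)^[n] (S.deltaMu y)) x

/-- The integral kernel `K(x,y)` of `𝓛^{−1/2}`, by subordination. -/
def Kker (x y : S.V) : ℝ :=
  (Real.sqrt Real.pi)⁻¹ * ∫ t in Set.Ioi (0 : ℝ), S.Hker t x y * t ^ (-(1 : ℝ)/2)

/-- The Riesz transform `𝓡 = ∇𝓛^{−1/2}`, defined on finitely supported functions. -/
def riesz (f : S.V → ℂ) : S.V → ℂ :=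
  fun x => ∑' y, ((S.Kker x y - S.Kker (S.pred x) y : ℝ) : ℂ) * f y * (S.wR y : ℂ)

/-- The integral operator with almost-radial kernel `q^{−ℓ(x)/2} G(d(x,y)) q^{−ℓ(y)/2}`. -/
def kernelOp (G : ℕ → ℂ) (f : S.V → ℂ) : S.V → ℂ :=
  fun x => ∑' y, (((q : ℝ) ^ (-((S.level x : ℤ) : ℝ)/2) * (q : ℝ) ^ (-((S.level y : ℤ) : ℝ)/2) : ℝ) : ℂ)
    * G (S.dist x y) * f y * (S.wR y : ℂ)

/-- The ε-horizontal gradient `∇_ε f(x) = (1/q) Σ_{y ∈ succ(x)} ε(y) f(y)`. -/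
def hgrad (ε f : S.V → ℂ) : S.V → ℂ :=
  fun x => (q : ℂ)⁻¹ * ∑' y : {y | S.pred y = x}, ε y.1 * f y.1

/-- The adjoint ε-horizontal gradient `∇_ε* f(x) = conj(ε(x)) f(𝔭(x))`. -/
def hgradStar (ε f : S.V → ℂ) : S.V → ℂ :=
  fun x => (starRingEnd ℂ) (ε x) * f (S.pred x)

/-- `‖ε‖_∞`. -/
def epsSup (ε : S.V → ℂ) : ℝ≥0∞ := ⨆ x, (‖ε x‖₊ : ℝ≥0∞)

/-- The `L²(μ)` inner product. -/
def inner2 (f g : S.V → ℂ) : ℂ := ∑' x, f x * (starRingEnd ℂ) (g x) * (S.wR x : ℂ)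

/-- `y ≤ x` iff `d(x,y) = ℓ(x) − ℓ(y)`. -/
def le' (y x : S.V) : Prop := (S.dist x y : ℤ) = S.level x - S.level y

/-- Admissible trapezoids of `(T,μ)`. -/
def IsAdmissibleTrapezoid (F : Set S.V) : Prop :=
  (∃ x, F = {x}) ∨
  ∃ (x₀ : S.V) (h1 h2 : ℕ), 0 < h1 ∧ 2 * h1 ≤ h2 ∧ h2 ≤ 12 * h1 ∧
    F = {x | S.le' x x₀ ∧ S.level x₀ - (h2 : ℤ) < S.level x ∧ S.level x ≤ S.level x₀ - (h1 : ℤ)}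

/-- `(1,∞)`-atoms of `(T,μ)`. -/
def IsOneInftyAtom (a : S.V → ℂ) : Prop :=
  ∃ F : Set S.V, S.IsAdmissibleTrapezoid F ∧ Function.support a ⊆ F ∧
    (∑' x, a x * (S.wR x : ℂ)) = 0 ∧ ∀ x, (‖a x‖₊ : ℝ≥0∞) ≤ (S.muS F)⁻¹

end FlowTree

namespace ZRiesz

/-- The discrete Laplacian on `ℤ`. -/
def deltaZ (F : ℤ → ℝ) : ℤ → ℝ := fun n => F n - (F (n + 1) + F (n - 1)) / 2

/-- The heat kernel `h_t^ℤ = e^{−tΔ_ℤ} δ_0` on `ℤ`, via the exponential power series. -/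
def heatZ (t : ℝ) (n : ℤ) : ℝ :=
  ∑' k : ℕ, ((-t) ^ k / (k.factorial : ℝ)) *
    (deltaZ^[k] (fun m => if m = 0 then (1 : ℝ) else 0)) n

/-- Kernel of the Riesz transform on `ℤ`: `k_ℤ(n) = π^{−1/2} ∫₀^∞ (∇_ℤ h_t^ℤ)(n) t^{−1/2} dt`. -/
def kZ (n : ℤ) : ℝ :=
  (Real.sqrt Real.pi)⁻¹ * ∫ t in Set.Ioi (0 : ℝ), (heatZ t n - heatZ t (n + 1)) * t ^ (-(1 : ℝ)/2)

/-- Kernel of the skew-symmetric part: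
`k̃_ℤ(n) = π^{−1/2} ∫₀^∞ (∇̃_ℤ h_t^ℤ)(n) t^{−1/2} dt`. -/
def ktZ (n : ℤ) : ℝ :=
  (Real.sqrt Real.pi)⁻¹ *
    ∫ t in Set.Ioi (0 : ℝ), (heatZ t (n - 1) - heatZ t (n + 1)) * t ^ (-(1 : ℝ)/2)

/-- The closed formula `k̃_ℤ(m) = (2√2/π) m/(m² − 1/4)`. -/
def ktZc (m : ℤ) : ℝ := (2 * Real.sqrt 2 / Real.pi) * (m : ℝ) / ((m : ℝ) ^ 2 - 1/4)

/-- `G(n) = Σ_{k≥0} q^{−(n+2k)/2} k̃_ℤ(n+2k+1)` (subordination kernel version). -/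
def Gint (q : ℕ) (n : ℕ) : ℝ :=
  ∑' k : ℕ, (q : ℝ) ^ (-(((n : ℝ)) + 2 * (k : ℝ))/2) * ktZ ((n : ℤ) + 2 * (k : ℤ) + 1)

/-- `G(n) = Σ_{k≥0} q^{−(n+2k)/2} k̃_ℤ(n+2k+1)` (closed formula version). -/
def Gc (q : ℕ) (n : ℕ) : ℝ :=
  ∑' k : ℕ, (q : ℝ) ^ (-(((n : ℝ)) + 2 * (k : ℝ))/2) * ktZc ((n : ℤ) + 2 * (k : ℤ) + 1)

/-- The `ℓ^p(ℤ)` norm. -/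
def zlpNorm (p : ℝ≥0∞) (F : ℤ → ℂ) : ℝ≥0∞ :=
  if p = ∞ then ⨆ n, (‖F n‖₊ : ℝ≥0∞)
  else (∑' n : ℤ, (‖F n‖₊ : ℝ≥0∞) ^ p.toReal) ^ (1 / p.toReal)

/-- The `ℓ^{1,∞}(ℕ)` quasinorm. -/
def natWk (F : ℕ → ℂ) : ℝ≥0∞ :=
  ⨆ t : ℝ≥0, (t : ℝ≥0∞) * ∑' (_ : {n : ℕ | t < ‖F n‖₊}), (1 : ℝ≥0∞)

end ZRiesz

/-- The punctured boundary `Ω = ∂T \ {ω_*}` of the tree, together with the measure `ν`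
with `ν(Ω_x) = q^{ℓ(x)}`.  `vert ω n` is the vertex `ω_n` of level `n` on the geodesic
`[ω, ω_*]`. -/
structure FlowTreeBoundary {q : ℕ} (S : FlowTree q) where
  Ω : Type
  mΩ : MeasurableSpace Ω
  ν : @MeasureTheory.Measure Ω mΩ
  vert : Ω → ℤ → S.V
  level_vert : ∀ ω n, S.level (vert ω n) = n
  pred_vert : ∀ ω n, S.pred (vert ω n) = vert ω (n + 1)
  vert_surj : ∀ x : S.V, ∃ ω, vert ω (S.level x) = x
  vert_inj : ∀ ω ω', (∀ n, vert ω n = vert ω' n) → ω = ω'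
  meas_cone : ∀ x : S.V, @MeasurableSet Ω mΩ {ω | vert ω (S.level x) = x}
  nu_cone : ∀ x : S.V, ν {ω | vert ω (S.level x) = x} = (q : ℝ≥0∞) ^ ((S.level x : ℤ) : ℝ)

attribute [instance] FlowTreeBoundary.mΩ

namespace FlowTreeBoundary

variable {q : ℕ} {S : FlowTree q} (B : FlowTreeBoundary S)

/-- The product measure `ν × #` on `Ω × ℤ`. -/
def pm : MeasureTheory.Measure (B.Ω × ℤ) := B.ν.prod MeasureTheory.Measure.count

/-- `Ω_x = {ω : x ∈ [ω, ω_*]}`. -/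
def cone (x : S.V) : Set B.Ω := {ω | B.vert ω (S.level x) = x}

/-- The lifting operator `Φf(ω,n) = f(ω_n)`. -/
def lift (f : S.V → ℂ) : B.Ω × ℤ → ℂ := fun p => f (B.vert p.1 p.2)

/-- The lifting operator on `ℝ≥0∞`-valued functions. -/
def liftNN (f : S.V → ℝ≥0∞) : B.Ω × ℤ → ℝ≥0∞ := fun p => f (B.vert p.1 p.2)

/-- The adjoint `Φ*g(x) = ν(Ω_x)^{−1} ∫_{Ω_x} g(ω, ℓ(x)) dν(ω)`. -/
def liftStar (g : B.Ω × ℤ → ℂ) : S.V → ℂ :=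
  fun x => ((B.ν (B.cone x)).toReal)⁻¹ * ∫ ω in B.cone x, g (ω, S.level x) ∂B.ν

/-- The adjoint `Φ*` on `ℝ≥0∞`-valued functions. -/
def liftStarNN (g : B.Ω × ℤ → ℝ≥0∞) : S.V → ℝ≥0∞ :=
  fun x => (B.ν (B.cone x))⁻¹ * ∫⁻ ω in B.cone x, g (ω, S.level x) ∂B.ν

end FlowTreeBoundary

/-- The weak `L^{1,∞}(μ)` quasinorm with respect to a measure. -/
def wkMeas {α : Type*} [MeasurableSpace α] (μ : MeasureTheory.Measure α) (g : α → ℂ) : ℝ≥0∞ :=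
  ⨆ t : ℝ≥0, (t : ℝ≥0∞) * μ {a | t < ‖g a‖₊}

/-- The weak `L^{1,∞}(μ)` quasinorm for `ℝ≥0∞`-valued functions. -/
def wkMeasNN {α : Type*} [MeasurableSpace α] (μ : MeasureTheory.Measure α) (g : α → ℝ≥0∞) :
    ℝ≥0∞ :=
  ⨆ t : ℝ≥0, (t : ℝ≥0∞) * μ {a | (t : ℝ≥0∞) < g a}

end

namespace ZRiesz

theorem abs_deltaZ_iterate_le (k : ℕ) (n : ℤ) :
    |(deltaZ^[k] (fun m => if m = 0 then (1 : ℝ) else 0)) n| ≤ 2 ^ k := by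
  induction k generalizing n with
  | zero =>
    simp only [iterate_zero, id_eq, pow_zero]
    split_ifs <;> simp
  | succ k ih =>
    rw [iterate_succ_apply', deltaZ]
    have h₀ := abs_le.1 (ih n)
    have h₁ := abs_le.1 (ih (n + 1))
    have h₂ := abs_le.1 (ih (n - 1))
    rw [abs_le, pow_succ]
    constructor <;> linarith

theorem deltaZ_iterate_even (k : ℕ) (n : ℤ) :
    (deltaZ^[k] (fun m => if m = 0 then (1 : ℝ) else 0)) (-n) =
      (deltaZ^[k] (fun m => if m = 0 then (1 : ℝ) else 0)) n := by
  induction k generalizing n with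
  | zero => simp
  | succ k ih =>
    simp only [iterate_succ_apply', deltaZ]
    rw [ih n, show -n + 1 = -(n - 1) by ring, show -n - 1 = -(n + 1) by ring, ih, ih, add_comm]

theorem integral_cos_int_mul (n : ℤ) :
    ∫ θ in (0 : ℝ)..Real.pi, Real.cos (n * θ) = if n = 0 then Real.pi else 0 := by
  split_ifs with h
  · simp [h]
  · have h' : (n : ℝ) ≠ 0 := by exact_mod_cast h
    rw [intervalIntegral.integral_comp_mul_left _ h', integral_cos]
    simp

theorem deltaZ_iterate_eq_integral (k : ℕ) (n : ℤ) :
    (deltaZ^[k] (fun m => if m = 0 then (1 : ℝ) else 0)) n =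
      Real.pi⁻¹ * ∫ θ in (0 : ℝ)..Real.pi, (1 - Real.cos θ) ^ k * Real.cos (n * θ) := by
  induction k generalizing n with
  | zero =>
    simp only [iterate_zero, id_eq, pow_zero, one_mul, integral_cos_int_mul]
    split_ifs <;> simp [Real.pi_ne_zero]
  | succ k ih =>
    have hi (m : ℤ) : IntervalIntegrable
        (fun θ : ℝ => (1 - Real.cos θ) ^ k * Real.cos (m * θ)) volume 0 Real.pi :=
      Continuous.intervalIntegrable (by fun_prop) _ _
    rw [iterate_succ_apply', deltaZ, ih, ih, ih, ← mul_add,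
      ← intervalIntegral.integral_add (hi _) (hi _), mul_div_assoc,
      ← intervalIntegral.integral_div, ← mul_sub, ← intervalIntegral.integral_sub (hi _)
        (((hi _).add (hi _)).div_const _)]
    congr 2
    ext θ
    push_cast
    rw [add_mul, sub_mul, one_mul, Real.cos_add, Real.cos_sub]
    ring

theorem heatZ_eq_integral (t : ℝ) (n : ℤ) :
    heatZ t n = Real.pi⁻¹ *
      ∫ θ in (0 : ℝ)..Real.pi, Real.exp (-t * (1 - Real.cos θ)) * Real.cos (n * θ) := by
  have hsum : HasSum
      (fun k : ℕ => ∫ θ in (0 : ℝ)..Real.pi,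
        ((-t) ^ k / (k.factorial : ℝ)) * ((1 - Real.cos θ) ^ k * Real.cos (n * θ)))
      (∫ θ in (0 : ℝ)..Real.pi, Real.exp (-t * (1 - Real.cos θ)) * Real.cos (n * θ)) := by
    refine intervalIntegral.hasSum_integral_of_dominated_convergence
      (fun k _ => (|t| * 2) ^ k / (k.factorial : ℝ)) ?_ ?_ ?_ ?_ ?_
    · intro k
      exact Continuous.aestronglyMeasurable (by fun_prop)
    · intro k
      refine Filter.Eventually.of_forall fun θ _ => ?_
      have h₁ : |1 - Real.cos θ| ≤ 2 := by
        rw [abs_le]; constructor <;> linarith [Real.neg_one_le_cos θ, Real.cos_le_one θ]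
      have h₂ : |1 - Real.cos θ| ^ k ≤ 2 ^ k := by gcongr
      rw [Real.norm_eq_abs, abs_mul, abs_mul, abs_div, abs_pow, abs_pow, abs_neg, Nat.abs_cast,
        mul_pow, mul_div_right_comm]
      gcongr
      calc _ ≤ (2 : ℝ) ^ k * 1 := by gcongr; exact Real.abs_cos_le_one _
        _ = _ := mul_one _
    · exact Filter.Eventually.of_forall fun θ _ => Real.summable_pow_div_factorial _
    · exact intervalIntegrable_const
    · refine Filter.Eventually.of_forall fun θ _ => ?_
      have := (NormedSpace.expSeries_div_hasSum_exp (-t * (1 - Real.cos θ))).mul_right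
        (Real.cos (n * θ))
      rw [← Real.exp_eq_exp_ℝ] at this
      refine this.congr_fun fun k => ?_
      rw [mul_pow]; ring
  rw [heatZ, ← hsum.tsum_eq, ← tsum_mul_left]
  refine tsum_congr fun k => ?_
  rw [deltaZ_iterate_eq_integral, intervalIntegral.integral_const_mul]
  ring

theorem heatZ_sub_eq_integral (t : ℝ) (n : ℤ) :
    heatZ t (n - 1) - heatZ t (n + 1) = 2 * Real.pi⁻¹ *
      ∫ θ in (0 : ℝ)..Real.pi,
        Real.exp (-t * (1 - Real.cos θ)) * Real.sin θ * Real.sin (n * θ) := by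
  have hi (m : ℤ) : IntervalIntegrable
      (fun θ : ℝ => Real.exp (-t * (1 - Real.cos θ)) * Real.cos (m * θ)) volume 0 Real.pi :=
    Continuous.intervalIntegrable (by fun_prop) _ _
  rw [heatZ_eq_integral, heatZ_eq_integral, ← mul_sub,
    ← intervalIntegral.integral_sub (hi _) (hi _), mul_comm (2 : ℝ), mul_assoc,
    ← intervalIntegral.integral_const_mul (2 : ℝ)]
  congr 1
  refine intervalIntegral.integral_congr fun θ _ => ?_
  push_cast
  simp only [add_mul, sub_mul, one_mul, Real.cos_add, Real.cos_sub]
  ring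

/-- The common majorant, up to a constant, of the increments `heatZ t (n - 1) - heatZ t (n + 1)`. -/
noncomputable def sinLaplace (t : ℝ) : ℝ :=
  ∫ θ in (0 : ℝ)..Real.pi, Real.exp (-t * (1 - Real.cos θ)) * Real.sin θ

theorem continuous_sinLaplace : Continuous sinLaplace :=
  intervalIntegral.continuous_parametric_intervalIntegral_of_continuous' (by fun_prop) _ _

theorem continuous_heatZ_sub (n : ℤ) :
    Continuous fun t => heatZ t (n - 1) - heatZ t (n + 1) := by
  simp only [heatZ_sub_eq_integral]
  exact (intervalIntegral.continuous_parametric_intervalIntegral_of_continuous'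
    (by fun_prop) _ _).const_mul _

theorem abs_heatZ_sub_le (t : ℝ) (n : ℤ) :
    |heatZ t (n - 1) - heatZ t (n + 1)| ≤ 2 * Real.pi⁻¹ * sinLaplace t := by
  rw [heatZ_sub_eq_integral, abs_mul, abs_of_nonneg (by positivity), sinLaplace]
  gcongr
  rw [← Real.norm_eq_abs]
  refine intervalIntegral.norm_integral_le_of_norm_le Real.pi_pos.le
    (Filter.Eventually.of_forall fun θ hθ => ?_) (Continuous.intervalIntegrable (by fun_prop) _ _)
  have h := Real.sin_nonneg_of_nonneg_of_le_pi hθ.1.le hθ.2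
  rw [norm_mul, Real.norm_of_nonneg (by positivity), Real.norm_eq_abs]
  exact mul_le_of_le_one_right (by positivity) (Real.abs_sin_le_one _)

theorem sinLaplace_nonneg (t : ℝ) : 0 ≤ sinLaplace t :=
  intervalIntegral.integral_nonneg Real.pi_pos.le fun _ hθ =>
    mul_nonneg (Real.exp_pos _).le (Real.sin_nonneg_of_nonneg_of_le_pi hθ.1 hθ.2)

theorem sinLaplace_le_two {t : ℝ} (ht : 0 ≤ t) : sinLaplace t ≤ 2 := by
  have h : sinLaplace t ≤ ∫ θ in (0 : ℝ)..Real.pi, Real.sin θ := by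
    refine intervalIntegral.integral_mono_on Real.pi_pos.le
      (Continuous.intervalIntegrable (by fun_prop) _ _)
      (Continuous.intervalIntegrable (by fun_prop) _ _) fun θ hθ => ?_
    refine mul_le_of_le_one_left (Real.sin_nonneg_of_nonneg_of_le_pi hθ.1 hθ.2) ?_
    rw [Real.exp_le_one_iff]
    nlinarith [Real.cos_le_one θ]
  rw [integral_sin] at h
  norm_num at h
  exact h

theorem sinLaplace_le_inv {t : ℝ} (ht : 0 < t) : sinLaplace t ≤ t⁻¹ := by
  have hd (θ : ℝ) : HasDerivAt (fun θ => -t⁻¹ * Real.exp (-t * (1 - Real.cos θ)))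
      (Real.exp (-t * (1 - Real.cos θ)) * Real.sin θ) θ := by
    have := ((((Real.hasDerivAt_cos θ).const_sub 1).const_mul (-t)).exp).const_mul (-t⁻¹)
    refine this.congr_deriv ?_
    field_simp
  rw [sinLaplace, intervalIntegral.integral_eq_sub_of_hasDerivAt (fun θ _ => hd θ)
    (Continuous.intervalIntegrable (by fun_prop) _ _)]
  have : 0 < t⁻¹ * Real.exp (-t * (1 - Real.cos Real.pi)) := by positivity
  simp only [Real.cos_zero, sub_self, mul_zero, Real.exp_zero]
  linarith

theorem integrableOn_sinLaplace_mul_rpow :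
    IntegrableOn (fun t : ℝ => sinLaplace t * t ^ (-(1 : ℝ) / 2)) (Ioi 0) := by
  have hm : Measurable fun t : ℝ => sinLaplace t * t ^ (-(1 : ℝ) / 2) :=
    continuous_sinLaplace.measurable.mul (measurable_id.pow_const _)
  rw [← Ioc_union_Ioi_eq_Ioi zero_le_one]
  refine IntegrableOn.union ?_ ?_
  · have h : IntegrableOn (fun t : ℝ => 2 * t ^ (-(1 : ℝ) / 2)) (Ioc 0 1) :=
      ((intervalIntegrable_iff_integrableOn_Ioc_of_le zero_le_one).1
        (intervalIntegral.intervalIntegrable_rpow' (by norm_num))).const_mul 2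
    refine h.mono' hm.aestronglyMeasurable ?_
    filter_upwards [ae_restrict_mem measurableSet_Ioc] with t ht
    have := Real.rpow_nonneg ht.1.le (-(1 : ℝ) / 2)
    rw [Real.norm_of_nonneg (mul_nonneg (sinLaplace_nonneg t) this)]
    gcongr
    exact sinLaplace_le_two ht.1.le
  · have h : IntegrableOn (fun t : ℝ => t ^ (-(3 : ℝ) / 2)) (Ioi 1) :=
      integrableOn_Ioi_rpow_of_lt (by norm_num) one_pos
    refine h.mono' hm.aestronglyMeasurable ?_
    filter_upwards [ae_restrict_mem measurableSet_Ioi] with t ht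
    have ht₀ : 0 < t := one_pos.trans ht
    have := Real.rpow_nonneg ht₀.le (-(1 : ℝ) / 2)
    rw [Real.norm_of_nonneg (mul_nonneg (sinLaplace_nonneg t) this),
      show (-(3 : ℝ) / 2) = -1 + -1 / 2 by norm_num, Real.rpow_add ht₀, Real.rpow_neg_one]
    gcongr
    exact sinLaplace_le_inv ht₀

/-- The common integrable majorant of `(heatZ t (n - 1) - heatZ t (n + 1)) t^{-1/2}`. -/
noncomputable def incrBound (t : ℝ) : ℝ := 2 * Real.pi⁻¹ * (sinLaplace t * t ^ (-(1 : ℝ) / 2))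

theorem integrableOn_incrBound : IntegrableOn incrBound (Ioi 0) :=
  integrableOn_sinLaplace_mul_rpow.const_mul _

theorem abs_heatZ_sub_mul_rpow_le {t : ℝ} (ht : 0 < t) (n : ℤ) :
    |(heatZ t (n - 1) - heatZ t (n + 1)) * t ^ (-(1 : ℝ) / 2)| ≤ incrBound t := by
  have h := Real.rpow_nonneg ht.le (-(1 : ℝ) / 2)
  rw [abs_mul, abs_of_nonneg h, incrBound, ← mul_assoc]
  gcongr
  exact abs_heatZ_sub_le t n

theorem integrableOn_heatZ_sub_mul_rpow (n : ℤ) :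
    IntegrableOn (fun t => (heatZ t (n - 1) - heatZ t (n + 1)) * t ^ (-(1 : ℝ) / 2)) (Ioi 0) := by
  refine integrableOn_incrBound.mono' ((continuous_heatZ_sub n).measurable.mul
    (measurable_id.pow_const _)).aestronglyMeasurable ?_
  filter_upwards [ae_restrict_mem measurableSet_Ioi] with t ht
  exact abs_heatZ_sub_mul_rpow_le ht n

theorem integral_abs_heatZ_sub_mul_rpow_le (n : ℤ) :
    ∫ t in Ioi (0 : ℝ), |(heatZ t (n - 1) - heatZ t (n + 1)) * t ^ (-(1 : ℝ) / 2)| ≤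
      ∫ t in Ioi (0 : ℝ), incrBound t :=
  setIntegral_mono_on (integrableOn_heatZ_sub_mul_rpow n).abs integrableOn_incrBound
    measurableSet_Ioi fun _ ht => abs_heatZ_sub_mul_rpow_le ht n

end ZRiesz

namespace FlowTree

theorem rpow_half_eq {q : ℕ} (hq : 2 ≤ q) (a : ℝ) (k : ℕ) :
    (q : ℝ) ^ (-(a + 2 * (k : ℝ)) / 2) = (q : ℝ) ^ (-a / 2) * ((q : ℝ)⁻¹) ^ k := by
  have hq₀ : (0 : ℝ) < q := by positivity
  rw [show -(a + 2 * (k : ℝ)) / 2 = -a / 2 + -(k : ℝ) by ring, Real.rpow_add hq₀,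
    Real.rpow_neg hq₀.le, Real.rpow_natCast, inv_pow]

theorem summable_rpow_half {q : ℕ} (hq : 2 ≤ q) (a : ℝ) :
    Summable fun k : ℕ => (q : ℝ) ^ (-(a + 2 * (k : ℝ)) / 2) := by
  have hq₁ : (1 : ℝ) < q := by exact_mod_cast hq
  simp only [rpow_half_eq hq]
  exact (summable_geometric_of_lt_one (by positivity) (inv_lt_one_of_one_lt₀ hq₁)).mul_left _

theorem summable_rpow_half_mul {q : ℕ} (hq : 2 ≤ q) (a : ℝ) {f : ℕ → ℝ} {B : ℝ}
    (hf : ∀ k, |f k| ≤ B) :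
    Summable fun k : ℕ => (q : ℝ) ^ (-(a + 2 * (k : ℝ)) / 2) * f k := by
  refine ((summable_rpow_half hq a).mul_right B).of_norm_bounded fun k => ?_
  rw [norm_mul, Real.norm_of_nonneg (by positivity), Real.norm_eq_abs]
  gcongr
  exact hf k

/-- The radial profile on the tree attached to a function `F` on `ℤ`:
`∑_{k ≥ 0} q^{-(n+2k)/2} (F(n+2k) - F(n+2k+2))`. -/
noncomputable def profile (q : ℕ) (F : ℤ → ℝ) (n : ℤ) : ℝ :=
  ∑' k : ℕ, (q : ℝ) ^ (-((n : ℝ) + 2 * (k : ℝ)) / 2) * (F (n + 2 * k) - F (n + 2 * k + 2))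

theorem summable_profile {q : ℕ} (hq : 2 ≤ q) {F : ℤ → ℝ} {B : ℝ} (hF : ∀ n, |F n| ≤ B) (n : ℤ) :
    Summable fun k : ℕ =>
      (q : ℝ) ^ (-((n : ℝ) + 2 * (k : ℝ)) / 2) * (F (n + 2 * k) - F (n + 2 * k + 2)) :=
  summable_rpow_half_mul hq n (B := B + B) fun _ => (abs_sub _ _).trans (add_le_add (hF _) (hF _))

theorem profile_deltaZ {q : ℕ} (hq : 2 ≤ q) {F : ℤ → ℝ} {B : ℝ} (hF : ∀ n, |F n| ≤ B) (n : ℤ) :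
    profile q (ZRiesz.deltaZ F) n = profile q F n -
      ((q : ℝ) ^ (-(1 : ℝ) / 2) * profile q F (n - 1) +
        (q : ℝ) ^ ((1 : ℝ) / 2) * profile q F (n + 1)) / 2 := by
  have hq₀ : (0 : ℝ) < q := by positivity
  have h₁ := (summable_profile hq hF (n - 1)).hasSum.mul_left ((q : ℝ) ^ (-(1 : ℝ) / 2))
  have h₂ := (summable_profile hq hF (n + 1)).hasSum.mul_left ((q : ℝ) ^ ((1 : ℝ) / 2))
  have h := (summable_profile hq hF n).hasSum.sub ((h₁.add h₂).div_const 2)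
  refine (tsum_congr fun k => ?_).trans h.tsum_eq
  have e₁ : (q : ℝ) ^ (-(1 : ℝ) / 2) * (q : ℝ) ^ (-(((n - 1 : ℤ) : ℝ) + 2 * (k : ℝ)) / 2) =
      (q : ℝ) ^ (-((n : ℝ) + 2 * (k : ℝ)) / 2) := by
    rw [← Real.rpow_add hq₀]; push_cast; ring_nf
  have e₂ : (q : ℝ) ^ ((1 : ℝ) / 2) * (q : ℝ) ^ (-(((n + 1 : ℤ) : ℝ) + 2 * (k : ℝ)) / 2) =
      (q : ℝ) ^ (-((n : ℝ) + 2 * (k : ℝ)) / 2) := by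
    rw [← Real.rpow_add hq₀]; push_cast; ring_nf
  rw [← mul_assoc, ← mul_assoc, e₁, e₂]
  simp only [ZRiesz.deltaZ]
  ring_nf

theorem profile_neg_one {q : ℕ} (hq : 2 ≤ q) {F : ℤ → ℝ} {B : ℝ} (hF : ∀ n, |F n| ≤ B)
    (he : ∀ n, F (-n) = F n) : profile q F (-1) = profile q F 1 := by
  rw [profile, (summable_profile hq hF (-1)).tsum_eq_zero_add]
  have h : F (-1 + 2 * ((0 : ℕ) : ℤ)) - F (-1 + 2 * ((0 : ℕ) : ℤ) + 2) = 0 := by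
    simp [he 1]
  rw [h, mul_zero, zero_add]
  refine tsum_congr fun k => ?_
  push_cast
  ring_nf

variable {q : ℕ} (S : FlowTree q)

theorem level_iterate_pred (n : ℕ) (x : S.V) : S.level (S.pred^[n] x) = S.level x + n := by
  induction n with
  | zero => simp
  | succ n ih => rw [iterate_succ_apply', level_pred, ih]; push_cast; ring

theorem level_add_eq_of_iterate_pred_eq {x y : S.V} {n m : ℕ}
    (h : S.pred^[n] x = S.pred^[m] y) : S.level x + n = S.level y + m := by
  rw [← level_iterate_pred, ← level_iterate_pred, h]

theorem dist_pred_self_le (x : S.V) : S.dist x (S.pred x) ≤ 1 :=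
  S.dist_le x (S.pred x) 1 0 rfl

theorem dist_of_iterate_pred_eq (x : S.V) (m : ℕ) (y : S.V) (hx : S.pred^[m] y = x) :
    S.dist x y = m := by
  obtain ⟨a, b, hab, hd⟩ := S.dist_spec x y
  have h₁ := S.dist_le x y 0 m hx.symm
  have h₂ := S.level_add_eq_of_iterate_pred_eq hab
  have h₃ := S.level_iterate_pred m y
  rw [hx] at h₃
  omega

theorem dist_pred_of_iterate_pred {x y : S.V} {m : ℕ} (hx : S.pred^[m] y = x) :
    S.dist (S.pred x) y = m + 1 :=
  S.dist_of_iterate_pred_eq _ _ _ (by rw [iterate_succ_apply', hx])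

theorem dist_of_pred_eq_of_iterate_pred {x y z : S.V} {m : ℕ} (hx : S.pred^[m] y = x)
    (hz : S.pred z = x) (hzy : ∀ k, S.pred^[k] y ≠ z) : S.dist z y = m + 1 := by
  have hd := S.dist_of_iterate_pred_eq x m y hx
  have h₁ := S.dist_le z y 1 m (by rw [hx, iterate_one, hz])
  obtain ⟨a, b, hab, hs⟩ := S.dist_spec z y
  rcases a with _ | a
  · exact absurd hab.symm (hzy b)
  · rw [iterate_succ_apply, hz] at hab
    have := S.dist_le x y a b hab
    omega

theorem dist_pred_of_forall_ne {x y : S.V} (hx : ∀ k, S.pred^[k] y ≠ x) :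
    S.dist (S.pred x) y + 1 = S.dist x y := by
  obtain ⟨a, b, hab, hs⟩ := S.dist_spec x y
  rcases a with _ | a
  · exact absurd hab.symm (hx b)
  · have h₁ := S.dist_le (S.pred x) y a b hab
    have h₂ := S.dist_triangle x (S.pred x) y
    have h₃ := S.dist_pred_self_le x
    omega

theorem dist_of_pred_eq_of_forall_ne {x y z : S.V} (hx : ∀ k, S.pred^[k] y ≠ x)
    (hz : S.pred z = x) : S.dist z y = S.dist x y + 1 := by
  have h := S.dist_pred_of_forall_ne (x := z) (y := y) fun k hk =>
    hx (k + 1) (by rw [iterate_succ_apply', hk, hz])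
  rw [← h, hz]

theorem sigStarR_eq_sum (x : S.V) (f : S.V → ℝ) :
    S.sigStarR f x = (q : ℝ)⁻¹ * ∑ z ∈ (S.succ_finite x).toFinset, f z := by
  have : Fintype {y | S.pred y = x} := (S.succ_finite x).fintype
  rw [sigStarR, tsum_fintype,
    Finset.sum_subtype (p := fun z => z ∈ {y | S.pred y = x}) (S.succ_finite x).toFinset
      fun _ => Set.Finite.mem_toFinset _]

theorem card_succ (x : S.V) : (S.succ_finite x).toFinset.card = q := by
  rw [← Set.ncard_eq_toFinset_card _ (S.succ_finite x)]
  exact S.succ_card x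

/-- The sum of a radial function around `y`, weighted as in `Σ + Σ*`, over the neighbours
of `x`. -/
theorem pred_add_succ_sum (hq : 2 ≤ q) (x y : S.V) {g : ℤ → ℝ} (hg : g (-1) = g 1) :
    g (S.dist (S.pred x) y) + ∑ z ∈ (S.succ_finite x).toFinset, g (S.dist z y) =
      g (S.dist x y - 1) + q * g (S.dist x y + 1) := by
  by_cases hx : ∃ k, S.pred^[k] y = x
  · obtain ⟨m, hm⟩ := hx
    rw [S.dist_pred_of_iterate_pred hm, S.dist_of_iterate_pred_eq x m y hm]
    have hlev {k : ℕ} {z : S.V} (hz : S.pred z = x) (hk : S.pred^[k] y = z) : k + 1 = m := by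
      have h₁ := S.level_iterate_pred k y
      have h₂ := S.level_iterate_pred m y
      have h₃ := S.level_pred z
      rw [hk] at h₁
      rw [hm] at h₂
      rw [hz] at h₃
      omega
    rcases m with _ | m
    · have : ∑ z ∈ (S.succ_finite x).toFinset, g (S.dist z y) =
          ∑ z ∈ (S.succ_finite x).toFinset, g 1 := by
        refine Finset.sum_congr rfl fun z hz => ?_
        have hz' : S.pred z = x := by simpa using hz
        rw [S.dist_of_pred_eq_of_iterate_pred hm hz' fun k hk => by simpa using hlev hz' hk]
        simp
      rw [this, Finset.sum_const, card_succ, nsmul_eq_mul]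
      simp [hg]
    · have hmem : S.pred^[m] y ∈ (S.succ_finite x).toFinset := by
        simp [← hm, iterate_succ_apply' S.pred m y]
      have : ∑ z ∈ (S.succ_finite x).toFinset.erase (S.pred^[m] y), g (S.dist z y) =
          ∑ z ∈ (S.succ_finite x).toFinset.erase (S.pred^[m] y), g (m + 2) := by
        refine Finset.sum_congr rfl fun z hz => ?_
        rw [Finset.mem_erase] at hz
        have hz' : S.pred z = x := by simpa using hz.2
        rw [S.dist_of_pred_eq_of_iterate_pred hm hz' fun k hk => hz.1 ?_]
        · push_cast; ring_nf
        · have := hlev hz' hk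
          obtain rfl : k = m := by omega
          exact hk.symm
      rw [← Finset.add_sum_erase _ _ hmem, this, Finset.sum_const, Finset.card_erase_of_mem hmem,
        card_succ, nsmul_eq_mul, S.dist_of_iterate_pred_eq _ m y rfl,
        Nat.cast_sub (by omega)]
      push_cast
      ring_nf
  · push Not at hx
    have : ∑ z ∈ (S.succ_finite x).toFinset, g (S.dist z y) =
        ∑ z ∈ (S.succ_finite x).toFinset, g (S.dist x y + 1) := by
      refine Finset.sum_congr rfl fun z hz => ?_
      rw [S.dist_of_pred_eq_of_forall_ne hx (by simpa using hz)]
      push_cast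
      rfl
    rw [this, Finset.sum_const, card_succ, nsmul_eq_mul, ← S.dist_pred_of_forall_ne hx]
    push_cast
    ring_nf

/-- The almost radial function `q^{-ℓ(x)/2} q^{-ℓ(y)/2} (profile F) (d(x,y))` of `x`. -/
noncomputable def almostRadial (y : S.V) (F : ℤ → ℝ) (x : S.V) : ℝ :=
  (q : ℝ) ^ (-((S.level x : ℤ) : ℝ) / 2) * (q : ℝ) ^ (-((S.level y : ℤ) : ℝ) / 2) *
    profile q F (S.dist x y)

theorem lapR_almostRadial (hq : 2 ≤ q) (y : S.V) {F : ℤ → ℝ} {B : ℝ} (hF : ∀ n, |F n| ≤ B)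
    (he : ∀ n, F (-n) = F n) :
    S.lapR (S.almostRadial y F) = S.almostRadial y (ZRiesz.deltaZ F) := by
  have hq₀ : (0 : ℝ) < q := by positivity
  ext x
  have hnb := S.pred_add_succ_sum hq x y (profile_neg_one hq hF he)
  have hs : ∑ z ∈ (S.succ_finite x).toFinset, S.almostRadial y F z =
      (q : ℝ) ^ (-((S.level x : ℤ) : ℝ) / 2) * (q : ℝ) ^ (-((S.level y : ℤ) : ℝ) / 2) *
        (q : ℝ) ^ ((1 : ℝ) / 2) *
          ∑ z ∈ (S.succ_finite x).toFinset, profile q F (S.dist z y) := by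
    rw [Finset.mul_sum]
    refine Finset.sum_congr rfl fun z hz => ?_
    have hz' : S.pred z = x := by simpa using hz
    rw [almostRadial, show -((S.level z : ℤ) : ℝ) / 2 = -((S.level x : ℤ) : ℝ) / 2 + 1 / 2 by
      rw [← hz', level_pred]; push_cast; ring, Real.rpow_add hq₀]
    ring
  have hp : S.almostRadial y F (S.pred x) =
      (q : ℝ) ^ (-((S.level x : ℤ) : ℝ) / 2) * (q : ℝ) ^ (-((S.level y : ℤ) : ℝ) / 2) *
        (q : ℝ) ^ (-(1 : ℝ) / 2) * profile q F (S.dist (S.pred x) y) := by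
    rw [almostRadial, show -((S.level (S.pred x) : ℤ) : ℝ) / 2 =
      -((S.level x : ℤ) : ℝ) / 2 + -1 / 2 by rw [level_pred]; push_cast; ring, Real.rpow_add hq₀]
    ring
  have hhalf : (q : ℝ)⁻¹ * (q : ℝ) ^ ((1 : ℝ) / 2) = (q : ℝ) ^ (-(1 : ℝ) / 2) := by
    rw [← Real.rpow_neg_one, ← Real.rpow_add hq₀]; norm_num
  have hhalf' : (q : ℝ) ^ (-(1 : ℝ) / 2) * q = (q : ℝ) ^ ((1 : ℝ) / 2) := by
    rw [← Real.rpow_add_one hq₀.ne']; norm_num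
  rw [lapR, sigStarR_eq_sum, hs, hp, almostRadial, almostRadial, profile_deltaZ hq hF, ← hhalf']
  rw [← hhalf'] at hhalf
  linear_combination
    (-(q : ℝ) ^ (-((S.level x : ℤ) : ℝ) / 2) * (q : ℝ) ^ (-((S.level y : ℤ) : ℝ) / 2)) / 2 *
      ((q : ℝ) ^ (-(1 : ℝ) / 2) * hnb +
        (∑ z ∈ (S.succ_finite x).toFinset, profile q F (S.dist z y)) * hhalf)

theorem deltaMu_eq_almostRadial (hq : 2 ≤ q) (y : S.V) :
    S.deltaMu y = S.almostRadial y (fun m => if m = 0 then (1 : ℝ) else 0) := by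
  have hq₀ : (0 : ℝ) < q := by positivity
  ext x
  have hterm (k : ℕ) : (S.dist x y : ℤ) + 2 * k + 2 ≠ 0 := by positivity
  rw [deltaMu, almostRadial, profile]
  simp only [hterm, if_false, sub_zero]
  split_ifs with h
  · subst h
    rw [dist_self, tsum_eq_single 0]
    · simp only [wR, Nat.cast_zero, mul_zero, add_zero, if_true]
      rw [← Real.rpow_add hq₀]
      simp [← Real.rpow_intCast, ← Real.rpow_neg hq₀.le]
    · intro k hk
      rw [if_neg (by positivity), mul_zero]
  · have hd : S.dist x y ≠ 0 := fun h₀ => h (S.eq_of_dist_eq_zero x y h₀)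
    have (k : ℕ) : (S.dist x y : ℤ) + 2 * k ≠ 0 := by positivity
    simp [this]

theorem lapR_iterate_deltaMu (hq : 2 ≤ q) (y : S.V) (n : ℕ) :
    S.lapR^[n] (S.deltaMu y) =
      S.almostRadial y (ZRiesz.deltaZ^[n] (fun m => if m = 0 then (1 : ℝ) else 0)) := by
  induction n with
  | zero => exact S.deltaMu_eq_almostRadial hq y
  | succ n ih =>
    rw [iterate_succ_apply', ih, iterate_succ_apply', S.lapR_almostRadial hq y
      (ZRiesz.abs_deltaZ_iterate_le n) (ZRiesz.deltaZ_iterate_even n)]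

theorem Hker_eq_almostRadial (hq : 2 ≤ q) (t : ℝ) (x y : S.V) :
    S.Hker t x y = S.almostRadial y (ZRiesz.heatZ t) x := by
  set D : ℕ → ℤ → ℝ := fun n => ZRiesz.deltaZ^[n] (fun m => if m = 0 then (1 : ℝ) else 0)
  have hsum (m : ℤ) : HasSum (fun n : ℕ => ((-t) ^ n / (n.factorial : ℝ)) * D n m)
      (ZRiesz.heatZ t m) := by
    refine (Summable.of_norm_bounded (Real.summable_pow_div_factorial (|t| * 2))
      fun n => ?_).hasSum
    rw [Real.norm_eq_abs, abs_mul, abs_div, abs_pow, abs_neg, Nat.abs_cast, mul_pow,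
      mul_div_right_comm]
    gcongr
    exact ZRiesz.abs_deltaZ_iterate_le n m
  have hswap : Summable (uncurry fun (n k : ℕ) =>
      (q : ℝ) ^ (-(((S.dist x y : ℤ) : ℝ) + 2 * (k : ℝ)) / 2) *
        (((-t) ^ n / (n.factorial : ℝ)) * (D n (S.dist x y + 2 * k) -
          D n (S.dist x y + 2 * k + 2)))) := by
    refine Summable.of_norm_bounded ((Real.summable_pow_div_factorial (|t| * 2)).mul_of_nonneg
      ((summable_rpow_half hq ((S.dist x y : ℤ) : ℝ)).mul_left 2)
      (fun n => by positivity) (fun k => by positivity)) ?_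
    rintro ⟨n, k⟩
    have h := (abs_sub (D n (S.dist x y + 2 * k)) (D n (S.dist x y + 2 * k + 2))).trans
      (add_le_add (ZRiesz.abs_deltaZ_iterate_le n _) (ZRiesz.abs_deltaZ_iterate_le n _))
    rw [uncurry_apply_pair, Real.norm_eq_abs, abs_mul, abs_mul, abs_div, abs_pow, abs_neg,
      Nat.abs_cast, abs_of_nonneg (Real.rpow_nonneg (Nat.cast_nonneg q) _), mul_pow]
    calc _ ≤ (q : ℝ) ^ (-(((S.dist x y : ℤ) : ℝ) + 2 * (k : ℝ)) / 2) *
          (|t| ^ n / n.factorial * (2 ^ n + 2 ^ n)) := by gcongr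
      _ = _ := by ring
  rw [Hker, almostRadial, profile]
  simp only [S.lapR_iterate_deltaMu hq y, almostRadial, profile]
  calc _ = ∑' n : ℕ, (q : ℝ) ^ (-((S.level x : ℤ) : ℝ) / 2) *
        (q : ℝ) ^ (-((S.level y : ℤ) : ℝ) / 2) *
        ∑' k : ℕ, (q : ℝ) ^ (-(((S.dist x y : ℤ) : ℝ) + 2 * (k : ℝ)) / 2) *
        (((-t) ^ n / (n.factorial : ℝ)) * (D n (S.dist x y + 2 * k) -
          D n (S.dist x y + 2 * k + 2))) := by
        refine tsum_congr fun n => ?_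
        rw [mul_left_comm, ← tsum_mul_left]
        congr 1
        exact tsum_congr fun k => by ring
    _ = _ := by
        rw [tsum_mul_left, ← hswap.tsum_comm]
        congr 1
        refine tsum_congr fun k => ?_
        rw [tsum_mul_left, ← ((hsum _).sub (hsum _)).tsum_eq]
        congr 1
        exact tsum_congr fun n => by ring

theorem Hker_eq_tsum (hq : 2 ≤ q) (t : ℝ) (x y : S.V) :
    S.Hker t x y =
      (q : ℝ) ^ (-((S.level x : ℤ) : ℝ) / 2) * (q : ℝ) ^ (-((S.level y : ℤ) : ℝ) / 2) *
        ∑' k : ℕ, (q : ℝ) ^ (-((S.dist x y : ℝ) + 2 * (k : ℝ)) / 2) *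
          (ZRiesz.heatZ t ((S.dist x y + 2 * k + 1 : ℤ) - 1) -
            ZRiesz.heatZ t ((S.dist x y + 2 * k + 1 : ℤ) + 1)) := by
  rw [S.Hker_eq_almostRadial hq, almostRadial, profile]
  simp only [add_sub_cancel_right, add_assoc _ (1 : ℤ) 1, one_add_one_eq_two, Int.cast_natCast]

end FlowTree

namespace ZRiesz

theorem abs_ktZ_le (n : ℤ) :
    |ktZ n| ≤ (Real.sqrt Real.pi)⁻¹ * ∫ t in Ioi (0 : ℝ), incrBound t := by
  rw [ktZ, abs_mul, abs_of_nonneg (by positivity)]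
  gcongr
  exact abs_integral_le_integral_abs.trans (integral_abs_heatZ_sub_mul_rpow_le n)

theorem integrableOn_tsum_and_hasSum_integral {q : ℕ} (hq : 2 ≤ q) (n : ℕ) :
    IntegrableOn (fun t : ℝ => ∑' k : ℕ, (q : ℝ) ^ (-((n : ℝ) + 2 * (k : ℝ)) / 2) *
      ((heatZ t ((n + 2 * k + 1 : ℤ) - 1) - heatZ t ((n + 2 * k + 1 : ℤ) + 1)) *
        t ^ (-(1 : ℝ) / 2))) (Ioi 0) ∧
    HasSum (fun k : ℕ => ∫ t in Ioi (0 : ℝ), (q : ℝ) ^ (-((n : ℝ) + 2 * (k : ℝ)) / 2) *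
      ((heatZ t ((n + 2 * k + 1 : ℤ) - 1) - heatZ t ((n + 2 * k + 1 : ℤ) + 1)) *
        t ^ (-(1 : ℝ) / 2)))
      (∫ t in Ioi (0 : ℝ), ∑' k : ℕ, (q : ℝ) ^ (-((n : ℝ) + 2 * (k : ℝ)) / 2) *
      ((heatZ t ((n + 2 * k + 1 : ℤ) - 1) - heatZ t ((n + 2 * k + 1 : ℤ) + 1)) *
        t ^ (-(1 : ℝ) / 2))) := by
  have hw := FlowTree.summable_rpow_half hq n
  set F : ℕ → ℝ → ℝ := fun k t => (q : ℝ) ^ (-((n : ℝ) + 2 * (k : ℝ)) / 2) *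
      ((heatZ t ((n + 2 * k + 1 : ℤ) - 1) - heatZ t ((n + 2 * k + 1 : ℤ) + 1)) *
        t ^ (-(1 : ℝ) / 2)) with hF
  have hbound {t : ℝ} (ht : 0 < t) (k : ℕ) :
      ‖F k t‖ ≤ (q : ℝ) ^ (-((n : ℝ) + 2 * (k : ℝ)) / 2) * incrBound t := by
    rw [hF, norm_mul, Real.norm_of_nonneg (by positivity)]
    gcongr
    exact abs_heatZ_sub_mul_rpow_le ht _
  have hint (k : ℕ) : Integrable (F k) (volume.restrict (Ioi 0)) :=
    (integrableOn_heatZ_sub_mul_rpow _).const_mul _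
  have hsum : ∀ᵐ t ∂volume.restrict (Ioi (0 : ℝ)), HasSum (fun k => F k t) (∑' k, F k t) := by
    filter_upwards [ae_restrict_mem measurableSet_Ioi] with t ht
    exact ((hw.mul_right (incrBound t)).of_norm_bounded (hbound ht)).hasSum
  refine ⟨?_, ?_⟩
  · have hmeas : AEStronglyMeasurable (fun t => ∑' k, F k t) (volume.restrict (Ioi 0)) := by
      refine aestronglyMeasurable_of_tendsto_ae Filter.atTop
        (f := fun N t => ∑ k ∈ Finset.range N, F k t)
        (fun N => Finset.aestronglyMeasurable_fun_sum _ fun k _ => (hint k).1) ?_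
      filter_upwards [hsum] with t ht using ht.tendsto_sum_nat
    refine (integrableOn_incrBound.const_mul
      (∑' k : ℕ, (q : ℝ) ^ (-((n : ℝ) + 2 * (k : ℝ)) / 2))).mono' hmeas ?_
    filter_upwards [ae_restrict_mem measurableSet_Ioi] with t ht
    rw [← tsum_mul_right]
    exact tsum_of_norm_bounded (hw.mul_right (incrBound t)).hasSum (hbound ht)
  · refine hasSum_integral_of_summable_integral_norm hint ?_
    refine (hw.mul_right (∫ t in Ioi (0 : ℝ), incrBound t)).of_nonneg_of_le
      (fun k => integral_nonneg fun t => norm_nonneg _) fun k => ?_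
    simp only [norm_mul, Real.norm_of_nonneg (Real.rpow_nonneg (Nat.cast_nonneg q) _)]
    rw [integral_const_mul]
    refine mul_le_mul_of_nonneg_left ?_ (by positivity)
    simpa only [abs_mul, Real.norm_eq_abs] using integral_abs_heatZ_sub_mul_rpow_le (n + 2 * k + 1)

end ZRiesz

open ZRiesz in
/-- the subordination integral defining the kernel of `𝓛^{−1/2}` converges and
`K(x,y) = q^{−ℓ(x)/2} G(d(x,y)) q^{−ℓ(y)/2}`, where
`G(n) = Σ_{k≥0} q^{−(n+2k)/2} k̃_ℤ(n+2k+1)` is absolutely convergent. -/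
theorem L_negsqrt_kernel_formula {q : ℕ} (hq : 2 ≤ q) (S : FlowTree q) (x y : S.V) :
    MeasureTheory.IntegrableOn (fun t : ℝ => S.Hker t x y * t ^ (-(1:ℝ)/2)) (Set.Ioi 0) ∧
    (∀ n : ℕ, Summable (fun k : ℕ =>
      |(q : ℝ) ^ (-((n : ℝ) + 2 * (k : ℝ))/2) * ktZ ((n : ℤ) + 2 * (k : ℤ) + 1)|)) ∧
    S.Kker x y = (q : ℝ) ^ (-((S.level x : ℤ) : ℝ)/2) * Gint q (S.dist x y) *
      (q : ℝ) ^ (-((S.level y : ℤ) : ℝ)/2) := by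
  have hH (t : ℝ) : S.Hker t x y * t ^ (-(1:ℝ)/2) =
      (q : ℝ) ^ (-((S.level x : ℤ) : ℝ)/2) * (q : ℝ) ^ (-((S.level y : ℤ) : ℝ)/2) *
        ∑' k : ℕ, (q : ℝ) ^ (-((S.dist x y : ℝ) + 2 * (k : ℝ)) / 2) *
          ((heatZ t ((S.dist x y + 2 * k + 1 : ℤ) - 1) -
            heatZ t ((S.dist x y + 2 * k + 1 : ℤ) + 1)) * t ^ (-(1 : ℝ) / 2)) := by
    rw [S.Hker_eq_tsum hq, mul_assoc, ← tsum_mul_right]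
    simp only [mul_assoc]
  obtain ⟨hint, hsum⟩ := integrableOn_tsum_and_hasSum_integral hq (S.dist x y)
  refine ⟨?_, fun n => (FlowTree.summable_rpow_half_mul hq n fun k => abs_ktZ_le _).abs, ?_⟩
  · simp only [hH]
    exact hint.const_mul _
  · rw [FlowTree.Kker]
    simp only [hH]
    rw [integral_const_mul, ← hsum.tsum_eq, mul_left_comm, ← tsum_mul_left, mul_right_comm, Gint]
    congr 2
    refine tsum_congr fun k => ?_
    rw [integral_const_mul, ktZ, mul_left_comm]
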